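/- (Robust inf-sup stability of the symmetric formulation, Lemma 5.3.) For every admissible pair (χ,w), the pair (χ,−w) is admissible, |||(χ,−w)|||_{eg,θ} = |||(χ,w)|||_{eg,θ}, and B_{sym,θ}((χ,w),(χ,−w)) = |||(χ,w)|||_{eg,θ}². Consequently, for every admissible (χ,w) with |||(χ,w)|||_{eg,θ} ≠ 0, the supremum over admissible pairs (τ,v) with |||(τ,v)|||_{eg,θ} ≠ 0 of B_{sym,θ}((χ,w),(τ,v)) / |||(τ,v)|||_{eg,θ} is at least |||(χ,w)|||_{eg,θ}. -/

import Mathlib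

open MeasureTheory

noncomputable section

/-- Frobenius inner product of two `d × d` arrays. -/
def fro {d : ℕ} (S T : Fin d → Fin d → ℝ) : ℝ := ∑ i, ∑ j, S i j * T i j

/-- The deviatoric map `A M = M − (tr M / d) • I`. -/
def devM {d : ℕ} (M : Fin d → Fin d → ℝ) : Fin d → Fin d → ℝ :=
  fun i j => M i j - ((∑ k, M k k) / (d : ℝ)) * (if i = j then 1 else 0)

/-- Partial derivative of a scalar field in the `j`-th coordinate direction. -/
def pd {d : ℕ} (f : (Fin d → ℝ) → ℝ) (x : Fin d → ℝ) (j : Fin d) : ℝ :=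
  fderiv ℝ f x (Pi.single j 1)

/-- Jacobian matrix `(∂v_i/∂x_j)` of a vector field. -/
def jac {d : ℕ} (v : (Fin d → ℝ) → Fin d → ℝ) (x : Fin d → ℝ) : Fin d → Fin d → ℝ :=
  fun i j => pd (fun y => v y i) x j

/-- Symmetric gradient `ε(v) = (∇v + (∇v)^T)/2`. -/
def epsV {d : ℕ} (v : (Fin d → ℝ) → Fin d → ℝ) (x : Fin d → ℝ) : Fin d → Fin d → ℝ :=
  fun i j => (jac v x i j + jac v x j i) / 2

/-- Row-wise divergence `(∇·τ)_i = Σ_j ∂_j τ_{ij}` of a matrix-valued field. -/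
def divT {d : ℕ} (τ : (Fin d → ℝ) → Fin d → Fin d → ℝ) (x : Fin d → ℝ) (i : Fin d) : ℝ :=
  ∑ j, pd (fun y => τ y i j) x j

/-- A pair `(τ, v)` is admissible: `τ` is `C¹` on `Ω`, `v` is `C¹` with compact
support contained in `Ω`, and the four weighted integrals are finite. -/
def Admissible {d : ℕ} (Ω : Set (Fin d → ℝ)) (ν θ : (Fin d → ℝ) → ℝ)
    (τ : (Fin d → ℝ) → Fin d → Fin d → ℝ) (v : (Fin d → ℝ) → Fin d → ℝ) : Prop :=
  (∀ i j, ContDiffOn ℝ 1 (fun x => τ x i j) Ω) ∧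
    ContDiff ℝ 1 v ∧ HasCompactSupport v ∧ tsupport v ⊆ Ω ∧
    IntegrableOn (fun x => (ν x)⁻¹ * fro (τ x) (τ x)) Ω ∧
    IntegrableOn (fun x => ν x * fro (jac v x) (jac v x)) Ω ∧
    IntegrableOn (fun x => (ν x / θ x) * ∑ i, (v x i) ^ 2) Ω ∧
    IntegrableOn (fun x => (θ x / ν x) * ∑ i, (divT τ x i) ^ 2) Ω

/-- The augmented (non-symmetric) bilinear form `B_θ`. -/
def Bform {d : ℕ} (Ω : Set (Fin d → ℝ)) (ν θ : (Fin d → ℝ) → ℝ)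
    (χ : (Fin d → ℝ) → Fin d → Fin d → ℝ) (w : (Fin d → ℝ) → Fin d → ℝ)
    (τ : (Fin d → ℝ) → Fin d → Fin d → ℝ) (v : (Fin d → ℝ) → Fin d → ℝ) : ℝ :=
  (∫ x in Ω, (ν x)⁻¹ * fro (devM (χ x)) (τ x))
    - 2 * (∫ x in Ω, fro (epsV w x) (τ x))
    + 2 * (∫ x in Ω, fro (epsV v x) (χ x))
    - (∫ x in Ω, fro (devM (χ x)) (epsV v x))
    + (∫ x in Ω, fro (devM (τ x)) (epsV w x))
    + (∫ x in Ω, ν x * fro (epsV w x) (epsV v x))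
    + (∫ x in Ω, (θ x / ν x) * ∑ i, divT χ x i * divT τ x i)

/-- The weighted energy norm `|||(τ,v)|||_{eg,θ}`. -/
def normEg {d : ℕ} (Ω : Set (Fin d → ℝ)) (ν θ : (Fin d → ℝ) → ℝ)
    (τ : (Fin d → ℝ) → Fin d → Fin d → ℝ) (v : (Fin d → ℝ) → Fin d → ℝ) : ℝ :=
  Real.sqrt ((∫ x in Ω, ν x * fro (epsV v x) (epsV v x))
    + (∫ x in Ω, (ν x)⁻¹ * fro (devM (τ x)) (devM (τ x)))
    + (∫ x in Ω, (θ x / ν x) * ∑ i, (divT τ x i) ^ 2))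

/-- The weighted full norm `|||(τ,v)|||_{full,θ}`. -/
def normFull {d : ℕ} (Ω : Set (Fin d → ℝ)) (ν θ : (Fin d → ℝ) → ℝ)
    (τ : (Fin d → ℝ) → Fin d → Fin d → ℝ) (v : (Fin d → ℝ) → Fin d → ℝ) : ℝ :=
  Real.sqrt ((∫ x in Ω, ν x * fro (jac v x) (jac v x))
    + (∫ x in Ω, (ν x / θ x) * ∑ i, (v x i) ^ 2)
    + (∫ x in Ω, (ν x)⁻¹ * fro (τ x) (τ x))
    + (∫ x in Ω, (θ x / ν x) * ∑ i, (divT τ x i) ^ 2))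

/-- The symmetric augmented bilinear form `B_{sym,θ}`. -/
def Bsym {d : ℕ} (Ω : Set (Fin d → ℝ)) (ν θ : (Fin d → ℝ) → ℝ)
    (χ : (Fin d → ℝ) → Fin d → Fin d → ℝ) (w : (Fin d → ℝ) → Fin d → ℝ)
    (τ : (Fin d → ℝ) → Fin d → Fin d → ℝ) (v : (Fin d → ℝ) → Fin d → ℝ) : ℝ :=
  (∫ x in Ω, (ν x)⁻¹ * fro (devM (χ x)) (τ x))
    - 2 * (∫ x in Ω, fro (epsV w x) (τ x))
    - 2 * (∫ x in Ω, fro (epsV v x) (χ x))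
    + (∫ x in Ω, fro (devM (χ x)) (epsV v x))
    + (∫ x in Ω, fro (devM (τ x)) (epsV w x))
    - (∫ x in Ω, ν x * fro (epsV w x) (epsV v x))
    + (∫ x in Ω, (θ x / ν x) * ∑ i, divT χ x i * divT τ x i)

/-! The energy norm and admissibility are quadratic in the velocity, hence invariant under
`w ↦ -w`. In `Bsym` tested with `(χ, -w)`, flipping the sign makes the terms `∫ ⟨ε(w), χ⟩` cancel
in pairs, likewise the terms `∫ ⟨Aχ, ε(w)⟩`, and turns `-∫ ν |ε(w)|²` into `+∫ ν |ε(w)|²`; moreover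
`⟨Aχ, χ⟩ = |Aχ|²` since `A` is an orthogonal projection. What remains is the squared energy norm, so
`(χ, -w)` is a test pair realizing the inf-sup bound. -/

section Algebra

variable {d : ℕ} (S T : Fin d → Fin d → ℝ)

lemma fro_neg_left : fro (-S) T = -fro S T := by
  simp [fro]

lemma fro_neg_right : fro S (-T) = -fro S T := by
  simp [fro]

lemma fro_neg_neg : fro (-S) (-T) = fro S T := by
  rw [fro_neg_left, fro_neg_right, neg_neg]

lemma fro_self_nonneg : 0 ≤ fro S S :=
  Finset.sum_nonneg fun i _ => Finset.sum_nonneg fun j _ => mul_self_nonneg (S i j)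

lemma fro_devM_right : fro S (devM T) = fro S T - (∑ k, T k k) / d * ∑ k, S k k := by
  simp [fro, devM, mul_sub, Finset.sum_sub_distrib, ← Finset.sum_mul, mul_comm]

lemma trace_devM : ∑ k, devM T k k = 0 := by
  rcases eq_or_ne d 0 with rfl | hd
  · exact Fin.sum_univ_zero _
  · have hd' : (d : ℝ) ≠ 0 := Nat.cast_ne_zero.mpr hd
    simp [devM, Finset.sum_sub_distrib, mul_div_cancel₀ _ hd']

lemma fro_devM_devM : fro (devM S) (devM T) = fro (devM S) T := by
  rw [fro_devM_right, trace_devM, mul_zero, sub_zero]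

end Algebra

section Fields

variable {d : ℕ} {Ω : Set (Fin d → ℝ)} {ν θ : (Fin d → ℝ) → ℝ}
  {τ : (Fin d → ℝ) → Fin d → Fin d → ℝ} {v : (Fin d → ℝ) → Fin d → ℝ}

lemma pd_neg (f : (Fin d → ℝ) → ℝ) (x : Fin d → ℝ) (j : Fin d) :
    pd (fun y => -f y) x j = -pd f x j := by
  rw [pd, fderiv_fun_neg, neg_apply, pd]

lemma jac_neg (v : (Fin d → ℝ) → Fin d → ℝ) (x : Fin d → ℝ) : jac (-v) x = -jac v x := by
  ext i j
  exact pd_neg (fun y => v y i) x j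

lemma epsV_neg (v : (Fin d → ℝ) → Fin d → ℝ) (x : Fin d → ℝ) : epsV (-v) x = -epsV v x := by
  ext i j
  simp only [epsV, jac_neg, Pi.neg_apply]
  ring

lemma Admissible.neg_right (h : Admissible Ω ν θ τ v) : Admissible Ω ν θ τ (-v) := by
  obtain ⟨hτ, hv, hcompact, hsupport, hτ_int, hjac_int, hv_int, hdiv_int⟩ := h
  refine ⟨hτ, hv.neg, hcompact.neg, (tsupport_neg v).trans_subset hsupport, hτ_int, ?_, ?_,
    hdiv_int⟩
  · simpa only [jac_neg, fro_neg_neg] using hjac_int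
  · simpa only [Pi.neg_apply, neg_sq] using hv_int

lemma normEg_neg_right : normEg Ω ν θ τ (-v) = normEg Ω ν θ τ v := by
  simp only [normEg, epsV_neg, fro_neg_neg]

lemma normEg_sq (hΩ : MeasurableSet Ω) (hν : ∀ x ∈ Ω, 0 ≤ ν x) (hθ : ∀ x ∈ Ω, 0 ≤ θ x) :
    normEg Ω ν θ τ v ^ 2 = (∫ x in Ω, ν x * fro (epsV v x) (epsV v x))
      + (∫ x in Ω, (ν x)⁻¹ * fro (devM (τ x)) (devM (τ x)))
      + (∫ x in Ω, (θ x / ν x) * ∑ i, (divT τ x i) ^ 2) := by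
  refine Real.sq_sqrt (add_nonneg (add_nonneg ?_ ?_) ?_) <;>
    refine setIntegral_nonneg hΩ fun x hx => mul_nonneg ?_ ?_
  · exact hν x hx
  · exact fro_self_nonneg _
  · exact inv_nonneg.mpr (hν x hx)
  · exact fro_self_nonneg _
  · exact div_nonneg (hθ x hx) (hν x hx)
  · exact Finset.sum_nonneg fun i _ => sq_nonneg _

lemma Bsym_self_neg_right (hΩ : MeasurableSet Ω) (hν : ∀ x ∈ Ω, 0 ≤ ν x)
    (hθ : ∀ x ∈ Ω, 0 ≤ θ x) : Bsym Ω ν θ τ v τ (-v) = normEg Ω ν θ τ v ^ 2 := by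
  rw [normEg_sq hΩ hν hθ]
  simp only [Bsym, epsV_neg, fro_neg_left, fro_neg_right, mul_neg, integral_neg, fro_devM_devM, sq]
  ring

end Fields

theorem stmt_9_general {d : ℕ} {Ω : Set (Fin d → ℝ)} (hΩ : IsOpen Ω) {ν θ : (Fin d → ℝ) → ℝ}
    (hν : ∀ x ∈ Ω, 0 < ν x) (hθ : ∀ x ∈ Ω, 0 < θ x)
    {χ : (Fin d → ℝ) → Fin d → Fin d → ℝ} {w : (Fin d → ℝ) → Fin d → ℝ}
    (hadm : Admissible Ω ν θ χ w) :
    Admissible Ω ν θ χ (-w) ∧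
      normEg Ω ν θ χ (-w) = normEg Ω ν θ χ w ∧
      Bsym Ω ν θ χ w χ (-w) = (normEg Ω ν θ χ w) ^ 2 ∧
      (normEg Ω ν θ χ w ≠ 0 →
        ∃ τ v, Admissible Ω ν θ τ v ∧ normEg Ω ν θ τ v ≠ 0 ∧
          normEg Ω ν θ χ w ≤ Bsym Ω ν θ χ w τ v / normEg Ω ν θ τ v) := by
  have hnorm : normEg Ω ν θ χ (-w) = normEg Ω ν θ χ w := normEg_neg_right
  have hB : Bsym Ω ν θ χ w χ (-w) = normEg Ω ν θ χ w ^ 2 :=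
    Bsym_self_neg_right hΩ.measurableSet (fun x hx => (hν x hx).le) fun x hx => (hθ x hx).le
  refine ⟨hadm.neg_right, hnorm, hB, fun hne => ⟨χ, -w, hadm.neg_right, hnorm.trans_ne hne, ?_⟩⟩
  rw [hB, hnorm, sq, mul_self_div_self]

/-- Robust inf-sup stability of the symmetric formulation,
Lemma 5.3: `(χ,−w)` is admissible, has the same energy norm as `(χ,w)`,
`B_{sym,θ}((χ,w),(χ,−w)) = |||(χ,w)|||²_{eg,θ}`, and consequently the supremum
of `B_{sym,θ}((χ,w),(τ,v))/|||(τ,v)|||_{eg,θ}` over admissible pairs with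
nonzero energy norm is at least `|||(χ,w)|||_{eg,θ}`. -/
theorem stmt_9 (d : ℕ) (Ω : Set (Fin d → ℝ)) (hΩ : IsOpen Ω)
    (ν θ : (Fin d → ℝ) → ℝ) (hνmeas : Measurable ν) (hθmeas : Measurable θ)
    (lam Lam θ₀ θ₁ : ℝ) (hlam : 0 < lam) (hνbd : ∀ x ∈ Ω, lam ≤ ν x ∧ ν x ≤ Lam)
    (hθ₀ : 0 < θ₀) (hθbd : ∀ x ∈ Ω, θ₀ ≤ θ x ∧ θ x ≤ θ₁)
    (χ : (Fin d → ℝ) → Fin d → Fin d → ℝ) (w : (Fin d → ℝ) → Fin d → ℝ)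
    (hadm : Admissible Ω ν θ χ w) :
    Admissible Ω ν θ χ (-w) ∧
      normEg Ω ν θ χ (-w) = normEg Ω ν θ χ w ∧
      Bsym Ω ν θ χ w χ (-w) = (normEg Ω ν θ χ w) ^ 2 ∧
      (normEg Ω ν θ χ w ≠ 0 →
        ∃ τ v, Admissible Ω ν θ τ v ∧ normEg Ω ν θ τ v ≠ 0 ∧
          normEg Ω ν θ χ w ≤ Bsym Ω ν θ χ w τ v / normEg Ω ν θ τ v) :=
  stmt_9_general hΩ (fun x hx => hlam.trans_le (hνbd x hx).1)
    (fun x hx => hθ₀.trans_le (hθbd x hx).1) hadm
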